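/- Suppose for each firm f the family ℋ_f is an intersecting family of subsets of W and the integer quotas satisfy λ̄_D = g_f(D) for all D ∈ ℋ_f, where g_f is integer-valued and submodular on intersecting pairs of ℋ_f. Then the linear program (LP) — maximize Σ_{w∈W} Σ_{f∈F} α(w,f) x_{w,f} over x ∈ ℝ^{W×F} subject to x ≥ 0, Σ_{f∈F} x_{w,f} ≤ 1 for every worker w, and Σ_{w∈D} x_{w,f} ≤ λ̄_D for every firm f and every D ∈ ℋ_f — has an optimal solution x* with x*_{w,f} ∈ {0,1} for all worker-firm pairs (w,f). -/

import Mathlib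

open Finset

namespace TwoSidedMatching

variable {W F : Type*} [Fintype W] [DecidableEq W] [Fintype F] [DecidableEq F]

/-- The set of workers assigned to firm `f` under assignment `X`. -/
def assigned (X : W → Option F) (f : F) : Finset W :=
  Finset.univ.filter fun w => X w = some f

/-- Payoff of worker `w`: `a w f + s w f` if matched to `f`, and `0` if unmatched. -/
def workerPayoff (a s : W → F → ℝ) (X : W → Option F) (w : W) : ℝ :=
  match X w with
  | some f => a w f + s w f
  | none => 0

/-- Payoff of firm `f`: value of its assigned set minus total salaries paid. -/
def firmPayoff (b : Finset W → F → ℝ) (s : W → F → ℝ) (X : W → Option F) (f : F) : ℝ :=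
  b (assigned X f) f - ∑ w ∈ assigned X f, s w f

/-- An assignment is feasible if each firm's assigned set is feasible or empty. -/
def Feasible (𝒯 : F → Set (Finset W)) (X : W → Option F) : Prop :=
  ∀ f : F, assigned X f ∈ 𝒯 f ∨ assigned X f = ∅

/-- r-feasibility: each firm's assigned set is feasible. -/
def RFeasible (𝒯 : F → Set (Finset W)) (X : W → Option F) : Prop :=
  ∀ f : F, assigned X f ∈ 𝒯 f

/-- A blocking coalition: a firm `f`, a feasible set `D ∈ 𝒯 f`, and salaries `r`
making all members of `D ∪ {f}` weakly better off and at least one strictly better off. -/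
def Blocks (a : W → F → ℝ) (b : Finset W → F → ℝ) (𝒯 : F → Set (Finset W))
    (s : W → F → ℝ) (X : W → Option F) : Prop :=
  ∃ f : F, ∃ D ∈ 𝒯 f, ∃ r : W → ℝ,
    (∀ w ∈ D, a w f + r w ≥ workerPayoff a s X w) ∧
    (b D f - ∑ w ∈ D, r w ≥ firmPayoff b s X f) ∧
    ((∃ w ∈ D, a w f + r w > workerPayoff a s X w) ∨
      b D f - ∑ w ∈ D, r w > firmPayoff b s X f)

/-- Stability: feasible, individually rational for workers and firms, and no blocking coalition. -/
def Stable (a : W → F → ℝ) (b : Finset W → F → ℝ) (𝒯 : F → Set (Finset W))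
    (s : W → F → ℝ) (X : W → Option F) : Prop :=
  Feasible 𝒯 X ∧ (∀ w, 0 ≤ workerPayoff a s X w) ∧
    (∀ f, 0 ≤ firmPayoff b s X f) ∧ ¬ Blocks a b 𝒯 s X

/-- r-stability: r-feasible, individually rational for workers, and no blocking coalition. -/
def RStable (a : W → F → ℝ) (b : Finset W → F → ℝ) (𝒯 : F → Set (Finset W))
    (s : W → F → ℝ) (X : W → Option F) : Prop :=
  RFeasible 𝒯 X ∧ (∀ w, 0 ≤ workerPayoff a s X w) ∧ ¬ Blocks a b 𝒯 s X

/-- Total match value of an assignment. -/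
def totalValue (a : W → F → ℝ) (b : Finset W → F → ℝ) (X : W → Option F) : ℝ :=
  (∑ w : W, match X w with
    | some f => a w f
    | none => 0) +
  ∑ f : F, b (assigned X f) f

/-- Two sets are intersecting if their intersection and both differences are nonempty. -/
def IntersectingSets (A B : Finset W) : Prop :=
  (A ∩ B).Nonempty ∧ (A \ B).Nonempty ∧ (B \ A).Nonempty

/-- An intersecting family: does not contain `∅` and is closed under
intersections and unions of intersecting members. -/
def IntersectingFamily (ℋ : Set (Finset W)) : Prop :=
  ∅ ∉ ℋ ∧ ∀ A ∈ ℋ, ∀ B ∈ ℋ, IntersectingSets A B → A ∩ B ∈ ℋ ∧ A ∪ B ∈ ℋ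

/-- Submodularity on intersecting pairs of a family. -/
def SubmodularOnIntersecting (ℋ : Set (Finset W)) (g : Finset W → ℤ) : Prop :=
  ∀ A ∈ ℋ, ∀ B ∈ ℋ, IntersectingSets A B → g (A ∪ B) + g (A ∩ B) ≤ g A + g B

/-- Supermodularity on intersecting pairs of a family. -/
def SupermodularOnIntersecting (ℋ : Set (Finset W)) (g : Finset W → ℤ) : Prop :=
  ∀ A ∈ ℋ, ∀ B ∈ ℋ, IntersectingSets A B → g A + g B ≤ g (A ∪ B) + g (A ∩ B)

/-- A hierarchy: `∅` is not a member and any two members are nested or disjoint. -/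
def Hierarchy (ℋ : Set (Finset W)) : Prop :=
  ∅ ∉ ℋ ∧ ∀ A ∈ ℋ, ∀ B ∈ ℋ, A ⊆ B ∨ B ⊆ A ∨ A ∩ B = ∅

/-- Feasible sets under upper-bound quotas: `|D ∩ D'| ≤ lam D'` for every `D' ∈ ℋ`. -/
def upperSets (ℋ : Set (Finset W)) (lam : Finset W → ℤ) : Set (Finset W) :=
  {D | ∀ D' ∈ ℋ, ((D ∩ D').card : ℤ) ≤ lam D'}

/-- Feasible sets under lower and upper quotas: `lo D' ≤ |D ∩ D'| ≤ hi D'` for `D' ∈ ℋ`. -/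
def quotaSets (ℋ : Set (Finset W)) (lo hi : Finset W → ℤ) : Set (Finset W) :=
  {D | ∀ D' ∈ ℋ, lo D' ≤ ((D ∩ D').card : ℤ) ∧ ((D ∩ D').card : ℤ) ≤ hi D'}

/-- Feasibility for the matching LP with upper-bound constraints. -/
def LPFeasible (ℋ : F → Set (Finset W)) (lam : F → Finset W → ℤ) (x : W → F → ℝ) : Prop :=
  (∀ w f, 0 ≤ x w f) ∧ (∀ w, ∑ f : F, x w f ≤ 1) ∧
    ∀ f : F, ∀ D ∈ ℋ f, ∑ w ∈ D, x w f ≤ (lam f D : ℝ)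

/-- Feasibility for the matching LP with lower and upper bound constraints. -/
def LPLBFeasible (ℋ : F → Set (Finset W)) (lo hi : F → Finset W → ℤ) (x : W → F → ℝ) : Prop :=
  (∀ w f, 0 ≤ x w f) ∧ (∀ w, ∑ f : F, x w f ≤ 1) ∧
    ∀ f : F, ∀ D ∈ ℋ f, (lo f D : ℝ) ≤ ∑ w ∈ D, x w f ∧ ∑ w ∈ D, x w f ≤ (hi f D : ℝ)

/-- The LP objective: total match value of a fractional assignment. -/
def LPobj (α : W → F → ℝ) (x : W → F → ℝ) : ℝ :=
  ∑ w : W, ∑ f : F, α w f * x w f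

/-! A maximum of a linear functional over a compact convex set is attained at an extreme point, so
it suffices that the extreme points of the feasible region are integral. The region is the
intersection of two packing polyhedra on `W × F`, one given by the disjoint sets `{w} × F` and one
by the sets `D × {f}`, and each is defined by a function that is submodular on intersecting pairs.

At a feasible `x`, submodularity closes the tight sets of either polyhedron under nonempty
intersections, so that `x` has integral sum on each atom of the tight sets. Hence the set `S` of
fractional coordinates meets no atom in exactly one element. The linear system asking for a `d`
supported on `S` with sum zero on every atom of both polyhedra then has rank less than `#S`. A
nonzero solution `d` vanishes on all tight sets, so `x ± t • d` is feasible for small `t` and `x`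
is not extreme. -/

section Counting

variable {E K : Type*} [Field K] {S : Finset E} {𝒜 𝒜₁ 𝒜₂ : Finset (Finset E)}

lemma exists_ne_zero_sum_eq_zero_of_card_lt (h : #𝒜 < #S) :
    ∃ d : E → K, d ≠ 0 ∧ (∀ e ∉ S, d e = 0) ∧ ∀ A ∈ 𝒜, ∑ e ∈ A, d e = 0 := by
  classical
  let incidence : E → 𝒜 → K := fun e A => if e ∈ A.1 then 1 else 0
  have hdep : ¬ LinearIndepOn K incidence (S : Set E) := fun hind => by
    have := hind.fintype_card_le_finrank
    simp only [Module.finrank_fintype_fun_eq_card, Fintype.card_coe, coe_sort_coe] at this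
    omega
  obtain ⟨c, hc, e₀, he₀, hce₀⟩ := not_linearIndepOn_finset_iff.1 hdep
  refine ⟨fun e => if e ∈ S then c e else 0, fun h0 => hce₀ (by simpa [he₀] using congrFun h0 e₀),
    fun e he => if_neg he, fun A hA => ?_⟩
  calc ∑ e ∈ A, (if e ∈ S then c e else 0) = ∑ e ∈ S, (if e ∈ A then c e else 0) := by
        rw [sum_ite_mem, sum_ite_mem, inter_comm]
    _ = (∑ e ∈ S, c e • incidence e) ⟨A, hA⟩ := by simp [incidence]
    _ = 0 := by rw [hc, Pi.zero_apply]

variable [DecidableEq E]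

lemma exists_ne_zero_sum_eq_zero_of_card_filter_lt (h : #{A ∈ 𝒜 | (A ∩ S).Nonempty} < #S) :
    ∃ d : E → K, d ≠ 0 ∧ (∀ e ∉ S, d e = 0) ∧ ∀ A ∈ 𝒜, ∑ e ∈ A, d e = 0 := by
  obtain ⟨d, hd0, hdS, hd⟩ := exists_ne_zero_sum_eq_zero_of_card_lt (K := K) h
  refine ⟨d, hd0, hdS, fun A hA => ?_⟩
  by_cases hAS : (A ∩ S).Nonempty
  · exact hd A (mem_filter.2 ⟨hA, hAS⟩)
  · exact sum_eq_zero fun e he => hdS e fun heS => hAS ⟨e, mem_inter.2 ⟨he, heS⟩⟩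

lemma two_mul_card_filter_inter_nonempty_le (h𝒜 : (𝒜 : Set (Finset E)).PairwiseDisjoint id)
    (hS : ∀ A ∈ 𝒜, #(A ∩ S) ≠ 1) :
    2 * #{A ∈ 𝒜 | (A ∩ S).Nonempty} ≤ #(𝒜.biUnion id ∩ S) := by
  have hdisj : (𝒜 : Set (Finset E)).PairwiseDisjoint fun A => A ∩ S :=
    h𝒜.mono fun A => inter_subset_left
  have htwo : ∀ A ∈ 𝒜.filter fun A => (A ∩ S).Nonempty, 2 ≤ #(A ∩ S) := fun A hA => by
    rw [mem_filter, ← card_pos] at hA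
    have := hS A hA.1
    omega
  calc 2 * #{A ∈ 𝒜 | (A ∩ S).Nonempty} ≤ ∑ A ∈ 𝒜 with (A ∩ S).Nonempty, #(A ∩ S) := by
        simpa [mul_comm] using card_nsmul_le_sum _ _ 2 htwo
    _ ≤ ∑ A ∈ 𝒜, #(A ∩ S) := sum_le_sum_of_subset (filter_subset _ _)
    _ = #(𝒜.biUnion id ∩ S) := by rw [biUnion_inter]; exact (card_biUnion hdisj).symm

lemma sum_sum_eq_sum_of_subset_biUnion {M : Type*} [AddCommMonoid M] {d : E → M}
    (h𝒜 : (𝒜 : Set (Finset E)).PairwiseDisjoint id) (hS : S ⊆ 𝒜.biUnion id)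
    (hd : ∀ e ∉ S, d e = 0) : ∑ A ∈ 𝒜, ∑ e ∈ A, d e = ∑ e ∈ S, d e :=
  (sum_biUnion h𝒜).symm.trans (sum_subset hS fun e _ he => hd e he).symm

/- There are at most `#S` equations, since each disjoint family meets `S` in at most `#S / 2` sets.
When there are exactly `#S`, both families cover `S`, so that each has total sum `∑ e ∈ S, d e` and
one equation may be dropped. -/
lemma exists_ne_zero_sum_eq_zero_of_card_inter_ne_one (hS : S.Nonempty)
    (h𝒜₁ : (𝒜₁ : Set (Finset E)).PairwiseDisjoint id) (hS₁ : ∀ A ∈ 𝒜₁, #(A ∩ S) ≠ 1)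
    (h𝒜₂ : (𝒜₂ : Set (Finset E)).PairwiseDisjoint id) (hS₂ : ∀ A ∈ 𝒜₂, #(A ∩ S) ≠ 1) :
    ∃ d : E → K, d ≠ 0 ∧ (∀ e ∉ S, d e = 0) ∧ ∀ A ∈ 𝒜₁ ∪ 𝒜₂, ∑ e ∈ A, d e = 0 := by
  have hcard₁ := two_mul_card_filter_inter_nonempty_le h𝒜₁ hS₁
  have hcard₂ := two_mul_card_filter_inter_nonempty_le h𝒜₂ hS₂
  have hle₁ := card_le_card (inter_subset_right : 𝒜₁.biUnion id ∩ S ⊆ S)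
  have hle₂ := card_le_card (inter_subset_right : 𝒜₂.biUnion id ∩ S ⊆ S)
  by_cases hlt : #{A ∈ 𝒜₁ | (A ∩ S).Nonempty} + #{A ∈ 𝒜₂ | (A ∩ S).Nonempty} < #S
  · refine exists_ne_zero_sum_eq_zero_of_card_filter_lt ?_
    rw [filter_union]
    exact (card_union_le _ _).trans_lt hlt
  have hcover₁ : S ⊆ 𝒜₁.biUnion id :=
    inter_eq_right.1 (eq_of_subset_of_card_le inter_subset_right (by omega))
  have hcover₂ : S ⊆ 𝒜₂.biUnion id :=
    inter_eq_right.1 (eq_of_subset_of_card_le inter_subset_right (by omega))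
  have hpos := hS.card_pos
  obtain ⟨A₀, hA₀⟩ : {A ∈ 𝒜₁ | (A ∩ S).Nonempty}.Nonempty := card_pos.1 (by omega)
  have hfewer : #{A ∈ 𝒜₁.erase A₀ ∪ 𝒜₂ | (A ∩ S).Nonempty} < #S := by
    have hunion := card_union_le ({A ∈ 𝒜₁ | (A ∩ S).Nonempty}.erase A₀)
      {A ∈ 𝒜₂ | (A ∩ S).Nonempty}
    have herase := card_erase_lt_of_mem hA₀
    rw [filter_union, filter_erase]
    omega
  obtain ⟨d, hd0, hdS, hd⟩ := exists_ne_zero_sum_eq_zero_of_card_filter_lt (K := K) hfewer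
  have hd₁ : ∀ A ∈ 𝒜₁, A ≠ A₀ → ∑ e ∈ A, d e = 0 := fun A hA hne =>
    hd A (mem_union_left _ (mem_erase.2 ⟨hne, hA⟩))
  have hd₂ : ∀ A ∈ 𝒜₂, ∑ e ∈ A, d e = 0 := fun A hA => hd A (mem_union_right _ hA)
  have hdA₀ : ∑ e ∈ A₀, d e = 0 :=
    calc ∑ e ∈ A₀, d e = ∑ A ∈ 𝒜₁, ∑ e ∈ A, d e :=
          (sum_eq_single_of_mem A₀ (mem_filter.1 hA₀).1 hd₁).symm
      _ = ∑ e ∈ S, d e := sum_sum_eq_sum_of_subset_biUnion h𝒜₁ hcover₁ hdS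
      _ = ∑ A ∈ 𝒜₂, ∑ e ∈ A, d e := (sum_sum_eq_sum_of_subset_biUnion h𝒜₂ hcover₂ hdS).symm
      _ = 0 := sum_eq_zero hd₂
  refine ⟨d, hd0, hdS, fun A hA => (mem_union.1 hA).elim (fun hA₁ => ?_) (hd₂ A)⟩
  obtain rfl | hne := eq_or_ne A A₀
  exacts [hdA₀, hd₁ A hA₁ hne]

end Counting

section Atoms

variable {E M : Type*} [DecidableEq E] [AddCommGroup M] {G : AddSubgroup M} {x : E → M}
  {T T₁ T₂ : Finset (Finset E)} {A p q : Finset E}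

/-- The atoms of a finite family of sets: the classes of elements of its union that lie in the same
members. -/
def atoms (T : Finset (Finset E)) : Finset (Finset E) :=
  (Finpartition.atomise (T.biUnion id) T).parts

lemma pairwiseDisjoint_atoms (T : Finset (Finset E)) :
    (atoms T : Set (Finset E)).PairwiseDisjoint id :=
  Finpartition.disjoint _

lemma nonempty_of_mem_atoms (hp : p ∈ atoms T) : p.Nonempty :=
  Finpartition.nonempty_of_mem_parts _ hp

lemma exists_superset_of_mem_atoms (hp : p ∈ atoms T) : ∃ A ∈ T, p ⊆ A := by
  obtain ⟨⟨e, he⟩, Q, -, rfl⟩ := Finpartition.mem_atomise.1 hp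
  rw [mem_filter, mem_biUnion] at he
  obtain ⟨⟨A, hA, heA⟩, heQ⟩ := he
  exact ⟨A, hA, fun v hv => ((mem_filter.1 hv).2 A hA).1 ((heQ A hA).2 heA)⟩

lemma eq_of_mem_atoms_of_subset_iff (hp : p ∈ atoms T) (hq : q ∈ atoms T)
    (h : ∀ A ∈ T, p ⊆ A ↔ q ⊆ A) : p = q := by
  obtain ⟨⟨u, hu⟩, P, -, rfl⟩ := Finpartition.mem_atomise.1 hp
  obtain ⟨⟨v, hv⟩, Q, -, rfl⟩ := Finpartition.mem_atomise.1 hq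
  have hPQ : ∀ A ∈ T, A ∈ P ↔ A ∈ Q := by
    simp only [subset_iff, mem_filter] at h hu hv
    grind
  exact filter_congr fun e _ => forall₂_congr fun A hA => by rw [hPQ A hA]

lemma sum_atoms_of_mem {N : Type*} [AddCommMonoid N] (x : E → N) (hA : A ∈ T) :
    ∑ p ∈ atoms T with p ⊆ A, ∑ e ∈ p, x e = ∑ e ∈ A, x e := by
  have hparts : {p ∈ atoms T | p ⊆ A} =
      {p ∈ (Finpartition.atomise (T.biUnion id) T).parts | p ⊆ A ∧ p.Nonempty} :=
    filter_congr fun p hp => (and_iff_left (nonempty_of_mem_atoms hp)).symm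
  have hunion : {p ∈ atoms T | p ⊆ A}.biUnion id = A :=
    hparts ▸ Finpartition.biUnion_filter_atomise hA (subset_biUnion_of_mem id hA)
  conv_rhs => rw [← hunion]
  exact (sum_biUnion ((pairwiseDisjoint_atoms T).subset (filter_subset _ _))).symm

/- Induction on a member `D` containing the atom: every other atom inside `D` lies in a smaller
member, unless the atom itself does. -/
lemma sum_mem_of_mem_atoms (hT : ∀ A ∈ T, ∀ B ∈ T, (A ∩ B).Nonempty → A ∩ B ∈ T)
    (hx : ∀ A ∈ T, ∑ e ∈ A, x e ∈ G) (hp : p ∈ atoms T) : ∑ e ∈ p, x e ∈ G := by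
  obtain ⟨D, hD, hpD⟩ := exists_superset_of_mem_atoms hp
  induction D using Finset.strongInduction generalizing p with
  | H D ih =>
    have hsmaller : ∀ B ∈ T, ¬ D ⊆ B → ∀ q ∈ atoms T, q ⊆ D → q ⊆ B → ∑ e ∈ q, x e ∈ G :=
      fun B hB hDB q hq hqD hqB =>
        have hqDB : q ⊆ D ∩ B := subset_inter hqD hqB
        ih (D ∩ B) (inter_subset_left.ssubset_of_ne (mt inter_eq_left.1 hDB)) hq
          (hT D hD B hB ((nonempty_of_mem_atoms hq).mono hqDB)) hqDB
    by_cases hmin : ∀ B ∈ T, p ⊆ B → D ⊆ B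
    · have hothers : ∑ q ∈ {q ∈ atoms T | q ⊆ D}.erase p, ∑ e ∈ q, x e ∈ G := by
        refine sum_mem fun q hq => ?_
        obtain ⟨hqp, hq, hqD⟩ := by simpa only [mem_erase, mem_filter] using hq
        obtain ⟨B, hB, hsep⟩ : ∃ B ∈ T, ¬ (p ⊆ B ↔ q ⊆ B) := by
          contrapose! hqp
          exact (eq_of_mem_atoms_of_subset_iff hp hq hqp).symm
        have hpB : ¬ p ⊆ B := fun hpB =>
          hsep (iff_of_true hpB (hqD.trans (hmin B hB hpB)))
        exact hsmaller B hB (fun hDB => hpB (hpD.trans hDB)) q hq hqD (by tauto)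
      have hD_sum := hx D hD
      rw [← sum_atoms_of_mem x hD, ← add_sum_erase _ _ (mem_filter.2 ⟨hp, hpD⟩)] at hD_sum
      exact (G.add_mem_cancel_right hothers).1 hD_sum
    · push Not at hmin
      obtain ⟨B, hB, hpB, hDB⟩ := hmin
      exact hsmaller B hB hDB p hp hpD hpB

lemma card_inter_ne_one_of_sum_mem {S : Finset E} (hS : ∀ e, e ∈ S ↔ x e ∉ G)
    (hA : ∑ e ∈ A, x e ∈ G) : #(A ∩ S) ≠ 1 := by
  intro hcard
  obtain ⟨e, he⟩ := card_eq_one.1 hcard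
  have hrest : ∑ v ∈ A \ S, x v ∈ G :=
    sum_mem fun v hv => not_not.1 fun hvG => (mem_sdiff.1 hv).2 ((hS v).2 hvG)
  have heS : e ∈ S := (mem_inter.1 (he ▸ mem_singleton_self e)).2
  rw [← sum_inter_add_sum_sdiff A S, he, sum_singleton, G.add_mem_cancel_right hrest] at hA
  exact (hS e).1 heS hA

lemma exists_ne_zero_sum_eq_zero_of_notMem [Finite E] (K : Type*) [Field K]
    (hT₁ : ∀ A ∈ T₁, ∀ B ∈ T₁, (A ∩ B).Nonempty → A ∩ B ∈ T₁)
    (hT₂ : ∀ A ∈ T₂, ∀ B ∈ T₂, (A ∩ B).Nonempty → A ∩ B ∈ T₂)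
    (hx₁ : ∀ A ∈ T₁, ∑ e ∈ A, x e ∈ G) (hx₂ : ∀ A ∈ T₂, ∑ e ∈ A, x e ∈ G)
    {e₀ : E} (he₀ : x e₀ ∉ G) :
    ∃ d : E → K, d ≠ 0 ∧ (∀ e, x e ∈ G → d e = 0) ∧ ∀ A ∈ T₁ ∪ T₂, ∑ e ∈ A, d e = 0 := by
  let S := (Set.toFinite {e | x e ∉ G}).toFinset
  have hS : ∀ e, e ∈ S ↔ x e ∉ G := by simp [S]
  obtain ⟨d, hd0, hdS, hd⟩ := exists_ne_zero_sum_eq_zero_of_card_inter_ne_one (K := K)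
    ⟨e₀, (hS e₀).2 he₀⟩
    (pairwiseDisjoint_atoms T₁)
    (fun p hp => card_inter_ne_one_of_sum_mem hS (sum_mem_of_mem_atoms hT₁ hx₁ hp))
    (pairwiseDisjoint_atoms T₂)
    (fun p hp => card_inter_ne_one_of_sum_mem hS (sum_mem_of_mem_atoms hT₂ hx₂ hp))
  refine ⟨d, hd0, fun e he => hdS e fun heS => (hS e).1 heS he, fun A hA => ?_⟩
  rcases mem_union.1 hA with hA | hA <;> rw [← sum_atoms_of_mem d hA]
  · exact sum_eq_zero fun p hp => hd p (mem_union_left _ (mem_filter.1 hp).1)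
  · exact sum_eq_zero fun p hp => hd p (mem_union_right _ (mem_filter.1 hp).1)

end Atoms

section ExtremePoints

open Filter Topology

variable {V : Type*} [AddCommGroup V] [Module ℝ V] {s : Set V}

lemma exists_mem_extremePoints_isMaxOn [TopologicalSpace V] [T2Space V] [IsTopologicalAddGroup V]
    [ContinuousSMul ℝ V] [LocallyConvexSpace ℝ V] (hs : IsCompact s) (hne : s.Nonempty)
    (l : StrongDual ℝ V) : ∃ x ∈ s.extremePoints ℝ, IsMaxOn l s x := by
  have hface : IsExposed ℝ s (l.toExposed s) := ContinuousLinearMap.toExposed.isExposed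
  obtain ⟨z, hz, hzmax⟩ := hs.exists_isMaxOn hne l.continuous.continuousOn
  obtain ⟨x, hx⟩ := (hface.isCompact hs).extremePoints_nonempty ⟨z, hz, hzmax⟩
  exact ⟨x, hface.isExtreme.extremePoints_subset_extremePoints hx, (extremePoints_subset hx).2⟩

lemma eq_zero_of_mem_extremePoints_of_eventually {x d : V} (hx : x ∈ s.extremePoints ℝ)
    (hd : ∀ᶠ t : ℝ in 𝓝 0, x + t • d ∈ s) : d = 0 := by
  have hneg : ∀ᶠ t : ℝ in 𝓝 0, x + (-t) • d ∈ s :=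
    (continuous_neg.tendsto' (0 : ℝ) 0 neg_zero).eventually hd
  obtain ⟨t, ⟨hplus, hminus⟩, ht⟩ :=
    (((hd.and hneg).filter_mono nhdsWithin_le_nhds).and
      (self_mem_nhdsWithin (s := Set.Ioi (0 : ℝ)))).exists
  have hmid : x ∈ openSegment ℝ (x + t • d) (x + (-t) • d) :=
    ⟨1 / 2, 1 / 2, by norm_num, by norm_num, by norm_num, by module⟩
  have htd : t • d = 0 := by simpa using hx.2 hplus hminus hmid
  exact (smul_eq_zero.1 htd).resolve_left ht.ne'

lemma eventually_add_mul_le {a b c : ℝ} (h : a ≤ c) (hb : a = c → b = 0) :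
    ∀ᶠ t in 𝓝 (0 : ℝ), a + t * b ≤ c := by
  rcases h.eq_or_lt with heq | hlt
  · simp [hb heq, heq]
  · have hcont : Continuous fun t : ℝ => a + t * b := by fun_prop
    exact ((hcont.tendsto' 0 a (by simp)).eventually_lt_const hlt).mono fun t => le_of_lt

end ExtremePoints

section Polyhedron

open Filter Topology

variable {E : Type*} {ℋ ℋ₁ ℋ₂ : Set (Finset E)} {g g₁ g₂ : Finset E → ℝ} {x d : E → ℝ}

/-- The packing polyhedron of a set function `g` on a family `ℋ`: the nonnegative vectors whose sum
over each member of `ℋ` is at most the value of `g` there. -/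
def packingPolyhedron (ℋ : Set (Finset E)) (g : Finset E → ℝ) : Set (E → ℝ) :=
  {x | 0 ≤ x ∧ ∀ A ∈ ℋ, ∑ e ∈ A, x e ≤ g A}

lemma isClosed_packingPolyhedron (ℋ : Set (Finset E)) (g : Finset E → ℝ) :
    IsClosed (packingPolyhedron ℋ g) := by
  simp only [packingPolyhedron, Set.ofPred_and, Set.ofPred_forall]
  exact isClosed_Ici.inter (isClosed_biInter fun A _ => isClosed_le (by fun_prop) (by fun_prop))

lemma apply_le_of_mem_packingPolyhedron (hx : x ∈ packingPolyhedron ℋ g) {A : Finset E}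
    (hA : A ∈ ℋ) {e : E} (he : e ∈ A) : x e ≤ g A :=
  (single_le_sum (fun v _ => hx.1 v) he).trans (hx.2 A hA)

lemma isCompact_packingPolyhedron (hcover : ∀ e, ∃ A ∈ ℋ, e ∈ A) :
    IsCompact (packingPolyhedron ℋ g) := by
  choose A hA heA using hcover
  exact (isCompact_Icc (a := 0) (b := fun e => g (A e))).of_isClosed_subset
    (isClosed_packingPolyhedron ℋ g)
    fun x hx => ⟨hx.1, fun e => apply_le_of_mem_packingPolyhedron hx (hA e) (heA e)⟩

lemma eventually_add_smul_mem_packingPolyhedron [Finite E] (hx : x ∈ packingPolyhedron ℋ g)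
    (hsupp : ∀ e, x e = 0 → d e = 0)
    (htight : ∀ A ∈ ℋ, ∑ e ∈ A, x e = g A → ∑ e ∈ A, d e = 0) :
    ∀ᶠ t : ℝ in 𝓝 0, x + t • d ∈ packingPolyhedron ℋ g := by
  simp only [packingPolyhedron, Set.mem_ofPred_eq, Pi.le_def, Pi.zero_apply, Pi.add_apply,
    Pi.smul_apply, smul_eq_mul, sum_add_distrib, ← mul_sum, eventually_and, eventually_all]
  refine ⟨fun e => ?_, fun A hA => eventually_add_mul_le (hx.2 A hA) (htight A hA)⟩
  have hneg := eventually_add_mul_le (b := -d e) (neg_nonpos.2 (hx.1 e)) fun h => by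
    rw [hsupp e (neg_eq_zero.1 h), neg_zero]
  exact hneg.mono fun t ht => by linarith

open Classical in
/-- The members of `ℋ` whose packing constraint holds with equality at `x`. -/
noncomputable def tightSets [Fintype E] (ℋ : Set (Finset E)) (g : Finset E → ℝ) (x : E → ℝ) :
    Finset (Finset E) :=
  {A | A ∈ ℋ ∧ ∑ e ∈ A, x e = g A}

lemma mem_tightSets [Fintype E] {A : Finset E} :
    A ∈ tightSets ℋ g x ↔ A ∈ ℋ ∧ ∑ e ∈ A, x e = g A := by
  simp [tightSets]

variable [DecidableEq E]

/-- `ℋ` is closed under unions and intersections of intersecting members, and `g` is submodular on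
intersecting pairs of `ℋ`. Here `∅ ∈ ℋ` is allowed, unlike in `IntersectingFamily`. -/
def IsIntersectingSubmodular (ℋ : Set (Finset E)) (g : Finset E → ℝ) : Prop :=
  ∀ A ∈ ℋ, ∀ B ∈ ℋ, IntersectingSets A B →
    A ∩ B ∈ ℋ ∧ A ∪ B ∈ ℋ ∧ g (A ∪ B) + g (A ∩ B) ≤ g A + g B

lemma IntersectingFamily.isIntersectingSubmodular_intCast {k : Finset E → ℤ}
    (hℋ : IntersectingFamily ℋ) (hk : SubmodularOnIntersecting ℋ k) :
    IsIntersectingSubmodular ℋ fun A => (k A : ℝ) := fun A hA B hB hAB =>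
  have ⟨hI, hU⟩ := hℋ.2 A hA B hB hAB
  ⟨hI, hU, by simpa only [← Int.cast_add, Int.cast_le] using hk A hA B hB hAB⟩

lemma isIntersectingSubmodular_of_pairwiseDisjoint (h : ℋ.PairwiseDisjoint id) :
    IsIntersectingSubmodular ℋ g := by
  rintro A hA B hB ⟨⟨e, he⟩, hAB, -⟩
  have hne : A ≠ B := by
    rintro rfl
    simp at hAB
  rw [mem_inter] at he
  exact (disjoint_left.1 (h hA hB hne) he.1 he.2).elim

/- Summing `x` is modular while `g` is submodular, so the two slacks at `A ∩ B` and `A ∪ B` add up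
to at most zero. -/
lemma IsIntersectingSubmodular.inter_mem_tightSets [Fintype E] (hg : IsIntersectingSubmodular ℋ g)
    (hx : x ∈ packingPolyhedron ℋ g) :
    ∀ A ∈ tightSets ℋ g x, ∀ B ∈ tightSets ℋ g x, (A ∩ B).Nonempty →
      A ∩ B ∈ tightSets ℋ g x := by
  intro A hA B hB hAB
  by_cases hsub : A ⊆ B
  · rwa [inter_eq_left.2 hsub]
  by_cases hsup : B ⊆ A
  · rwa [inter_eq_right.2 hsup]
  rw [mem_tightSets] at hA hB ⊢
  obtain ⟨hI, hU, hle⟩ := hg A hA.1 B hB.1 ⟨hAB, sdiff_nonempty.2 hsub, sdiff_nonempty.2 hsup⟩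
  have hmod := sum_union_inter (s₁ := A) (s₂ := B) (f := x)
  exact ⟨hI, le_antisymm (hx.2 _ hI) (by linarith [hx.2 _ hU])⟩

theorem apply_mem_of_mem_extremePoints_packingPolyhedron_inter [Finite E] (G : AddSubgroup ℝ)
    (h₁ : IsIntersectingSubmodular ℋ₁ g₁) (h₂ : IsIntersectingSubmodular ℋ₂ g₂)
    (hG₁ : ∀ A ∈ ℋ₁, g₁ A ∈ G) (hG₂ : ∀ A ∈ ℋ₂, g₂ A ∈ G)
    (hx : x ∈ (packingPolyhedron ℋ₁ g₁ ∩ packingPolyhedron ℋ₂ g₂).extremePoints ℝ) (e : E) :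
    x e ∈ G := by
  have := Fintype.ofFinite E
  have hx₁ := (extremePoints_subset hx).1
  have hx₂ := (extremePoints_subset hx).2
  have htight {ℋ : Set (Finset E)} {g : Finset E → ℝ} (hG : ∀ A ∈ ℋ, g A ∈ G) :
      ∀ A ∈ tightSets ℋ g x, ∑ e ∈ A, x e ∈ G := fun A hA => by
    rw [mem_tightSets] at hA
    exact hA.2 ▸ hG A hA.1
  by_contra he
  obtain ⟨d, hd0, hdG, hd⟩ := exists_ne_zero_sum_eq_zero_of_notMem ℝ
    (h₁.inter_mem_tightSets hx₁) (h₂.inter_mem_tightSets hx₂) (htight hG₁) (htight hG₂) he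
  have hsupp : ∀ e, x e = 0 → d e = 0 := fun e h0 => hdG e (h0 ▸ G.zero_mem)
  refine hd0 (eq_zero_of_mem_extremePoints_of_eventually hx (.and ?_ ?_))
  · exact eventually_add_smul_mem_packingPolyhedron hx₁ hsupp fun A hA hAx =>
      hd A (mem_union_left _ (mem_tightSets.2 ⟨hA, hAx⟩))
  · exact eventually_add_smul_mem_packingPolyhedron hx₂ hsupp fun A hA hAx =>
      hd A (mem_union_right _ (mem_tightSets.2 ⟨hA, hAx⟩))

end Polyhedron

section MatchingLP

variable {W F : Type*}

/-- The supports `{w} × F` of the worker constraints of the matching LP. -/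
def workerFamily (W F : Type*) [Fintype F] : Set (Finset (W × F)) :=
  Set.range fun w => {w} ×ˢ univ

/-- The supports `D × {f}`, for `D ∈ ℋ f`, of the firm constraints of the matching LP. -/
def firmFamily (ℋ : F → Set (Finset W)) : Set (Finset (W × F)) :=
  {A | ∃ f, ∃ D ∈ ℋ f, D ×ˢ {f} = A}

/-- The right-hand sides of the firm constraints: the value at `D × {f}` is `g f D` when `D` is
nonempty. The sum over the second projection serves only to read off `f` from `D × {f}`. -/
def firmQuota [DecidableEq W] [DecidableEq F] (g : F → Finset W → ℝ) (A : Finset (W × F)) : ℝ :=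
  ∑ f ∈ A.image Prod.snd, g f (A.image Prod.fst)

lemma firmQuota_product_singleton [DecidableEq W] [DecidableEq F] (g : F → Finset W → ℝ) (f : F)
    {D : Finset W} (hD : D.Nonempty) : firmQuota g (D ×ˢ {f}) = g f D := by
  rw [firmQuota, product_image_snd hD, product_image_fst (singleton_nonempty f), sum_singleton]

lemma forall_mem_firmFamily {ℋ : F → Set (Finset W)} {p : Finset (W × F) → Prop} :
    (∀ A ∈ firmFamily ℋ, p A) ↔ ∀ f, ∀ D ∈ ℋ f, p (D ×ˢ {f}) := by
  constructor
  · exact fun h f D hD => h _ ⟨f, D, hD, rfl⟩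
  · rintro h _ ⟨f, D, hD, rfl⟩
    exact h f D hD

lemma pairwiseDisjoint_workerFamily [Fintype F] : (workerFamily W F).PairwiseDisjoint id := by
  rintro _ ⟨w, rfl⟩ _ ⟨w', rfl⟩ hne
  have hww' : w ≠ w' := fun h => hne (h ▸ rfl)
  exact disjoint_product.2 (.inl (disjoint_singleton.2 hww'))

lemma exists_mem_workerFamily [Fintype F] (e : W × F) : ∃ A ∈ workerFamily W F, e ∈ A :=
  ⟨_, ⟨e.1, rfl⟩, by simp⟩

lemma eq_and_intersectingSets_of_product_singleton [DecidableEq W] [DecidableEq F] {A B : Finset W}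
    {f f' : F} (h : IntersectingSets (A ×ˢ {f}) (B ×ˢ {f'})) : f = f' ∧ IntersectingSets A B := by
  obtain ⟨⟨e, he⟩, hAB, hBA⟩ := h
  simp only [mem_inter, mem_product, mem_singleton] at he
  obtain rfl : f = f' := he.1.2.symm.trans he.2.2
  simp only [product_singleton, Finset.sdiff_nonempty, map_subset_map] at hAB hBA
  exact ⟨rfl, ⟨e.1, mem_inter.2 ⟨he.1.1, he.2.1⟩⟩, Finset.sdiff_nonempty.2 hAB,
    Finset.sdiff_nonempty.2 hBA⟩

lemma isIntersectingSubmodular_firmFamily [DecidableEq W] [DecidableEq F]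
    {ℋ : F → Set (Finset W)} {g : F → Finset W → ℝ} (hne : ∀ f, ∀ D ∈ ℋ f, D.Nonempty)
    (h : ∀ f, IsIntersectingSubmodular (ℋ f) (g f)) :
    IsIntersectingSubmodular (firmFamily ℋ) (firmQuota g) := by
  rintro _ ⟨f, A, hA, rfl⟩ _ ⟨f', B, hB, rfl⟩ hAB
  obtain ⟨rfl, hint⟩ := eq_and_intersectingSets_of_product_singleton hAB
  obtain ⟨hI, hU, hle⟩ := h f A hA B hB hint
  rw [← union_product, ← inter_product]
  refine ⟨⟨f, _, hI, rfl⟩, ⟨f, _, hU, rfl⟩, ?_⟩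
  simpa only [firmQuota_product_singleton g f (hne f _ _), hI, hU, hA, hB] using hle

lemma lpFeasible_iff_uncurry_mem [Fintype F] [DecidableEq W] [DecidableEq F]
    {ℋ : F → Set (Finset W)} {lam : F → Finset W → ℤ} (hne : ∀ f, ∀ D ∈ ℋ f, D.Nonempty)
    {x : W → F → ℝ} :
    LPFeasible ℋ lam x ↔ Function.uncurry x ∈ packingPolyhedron (workerFamily W F) 1 ∩
      packingPolyhedron (firmFamily ℋ) (firmQuota fun f D => (lam f D : ℝ)) := by
  have hnonneg : 0 ≤ Function.uncurry x ↔ ∀ w f, 0 ≤ x w f := Prod.forall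
  have hworker : (∀ A ∈ workerFamily W F, ∑ e ∈ A, Function.uncurry x e ≤
      (1 : Finset (W × F) → ℝ) A) ↔ ∀ w, ∑ f, x w f ≤ 1 := by
    simp [workerFamily]
  have hfirm : (∀ A ∈ firmFamily ℋ, ∑ e ∈ A, Function.uncurry x e ≤
      firmQuota (fun f D => (lam f D : ℝ)) A) ↔ ∀ f, ∀ D ∈ ℋ f, ∑ w ∈ D, x w f ≤ lam f D := by
    refine forall_mem_firmFamily.trans (forall₃_congr fun f D hD => ?_)
    rw [firmQuota_product_singleton _ f (hne f D hD), sum_product]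
    simp only [sum_singleton, Function.uncurry_apply_pair]
  simp only [LPFeasible, packingPolyhedron, Set.mem_inter_iff, Set.mem_ofPred_eq, hnonneg, hworker,
    hfirm]
  tauto

lemma LPFeasible.apply_le_one [Fintype F] {ℋ : F → Set (Finset W)} {lam : F → Finset W → ℤ}
    {x : W → F → ℝ} (hx : LPFeasible ℋ lam x) (w : W) (f : F) : x w f ≤ 1 :=
  (single_le_sum (fun f _ => hx.1 w f) (mem_univ f)).trans (hx.2.1 w)

lemma eq_zero_or_one_of_mem_range_intCast {R : Type*} [Ring R] [LinearOrder R]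
    [IsStrictOrderedRing R] {r : R} (hr : r ∈ (Int.castAddHom R).range) (h0 : 0 ≤ r) (h1 : r ≤ 1) :
    r = 0 ∨ r = 1 := by
  obtain ⟨n, rfl⟩ := hr
  simp only [Int.coe_castAddHom] at h0 h1 ⊢
  norm_cast at h0 h1 ⊢
  omega

end MatchingLP

/-- **Integral optimal solutions of the matching LP under polymatroid constraints.**
If each `ℋ f` is an intersecting family with nonnegative integer quotas `lam f` that are
submodular on intersecting pairs, then the matching LP has an optimal solution with all
entries in `{0, 1}`. -/
theorem lp_has_integral_optimal_solution
    {W F : Type*} [Fintype W] [DecidableEq W] [Fintype F] [DecidableEq F]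
    (α : W → F → ℝ) (ℋ : F → Set (Finset W)) (lam : F → Finset W → ℤ)
    (hpos : ∀ f : F, ∀ D ∈ ℋ f, 0 ≤ lam f D)
    (hfam : ∀ f : F, IntersectingFamily (ℋ f))
    (hsub : ∀ f : F, SubmodularOnIntersecting (ℋ f) (lam f)) :
    ∃ x : W → F → ℝ, LPFeasible ℋ lam x ∧
      (∀ y : W → F → ℝ, LPFeasible ℋ lam y → LPobj α y ≤ LPobj α x) ∧
      ∀ w f, x w f = 0 ∨ x w f = 1 := by
  have hne f D (hD : D ∈ ℋ f) : D.Nonempty :=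
    nonempty_iff_ne_empty.2 fun hD₀ => (hfam f).1 (hD₀ ▸ hD)
  let objective : StrongDual ℝ (W × F → ℝ) := ∑ e, α e.1 e.2 • ContinuousLinearMap.proj e
  have hobjective x : objective (Function.uncurry x) = LPobj α x := by
    simp [objective, LPobj, Fintype.sum_prod_type]
  have hzero : LPFeasible ℋ lam 0 := ⟨by simp, by simp, by simpa using hpos⟩
  obtain ⟨z, hz, hmax⟩ := exists_mem_extremePoints_isMaxOn
    ((isCompact_packingPolyhedron exists_mem_workerFamily).inter_right
      (isClosed_packingPolyhedron _ _))
    ⟨_, (lpFeasible_iff_uncurry_mem hne).1 hzero⟩ objective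
  have hx : LPFeasible ℋ lam (Function.curry z) :=
    (lpFeasible_iff_uncurry_mem hne).2 (extremePoints_subset hz)
  have hinteger := apply_mem_of_mem_extremePoints_packingPolyhedron_inter (Int.castAddHom ℝ).range
    (isIntersectingSubmodular_of_pairwiseDisjoint pairwiseDisjoint_workerFamily)
    (isIntersectingSubmodular_firmFamily hne fun f =>
      (hfam f).isIntersectingSubmodular_intCast (hsub f))
    (fun _ _ => ⟨1, Int.cast_one⟩) (fun _ _ => sum_mem fun _ _ => ⟨_, rfl⟩) hz
  refine ⟨Function.curry z, hx, fun y hy => ?_, fun w f =>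
    eq_zero_or_one_of_mem_range_intCast (hinteger (w, f)) (hx.1 w f) (hx.apply_le_one w f)⟩
  rw [← hobjective, ← hobjective]
  exact hmax ((lpFeasible_iff_uncurry_mem hne).1 hy)

end TwoSidedMatching
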